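/- Suppose Z, X, U, W are (closed, infinite dimensional) subspaces of X_p with Z ⊆ X = U ⊕ W, U isomorphic to ℓ_2, and W isomorphic to ℓ_p. Suppose Z has a normalized K-unconditional basis (z_n), the limit β = lim_{n→∞} r(z_n) exists, and β' = lim_{n→∞} inf{ b : for every ε > 0 there exists u ∈ U with ‖P_n u‖ < ε and r(u) ≤ b } exists, where P_n is the basis projection of X_p onto the span of the first n natural basis vectors. If β > 0, β' ≤ 1, and P is a bounded projection from X onto Z, then ‖P‖ ≥ β'/(Kβ). -/

import Mathlib

open scoped ENNReal

noncomputable section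

/-- The sequence space `ℓ_p` (of real sequences), for a real exponent `p`. -/
abbrev SeqP (p : ℝ) := lp (fun _ : ℕ => ℝ) (ENNReal.ofReal p)

/-- The sequence space `ℓ_2` (of real sequences). -/
abbrev Seq2 := lp (fun _ : ℕ => ℝ) 2

/-- The space `X_{p,w}`, realized as the submodule of `ℓ_p ⊕_∞ ℓ_2` consisting of the
pairs `(x, y)` with `y n = w n * x n`.  Since the norm on the product is the maximum of
the two norms, this is exactly the completion of the finitely supported sequences under
`‖a‖ = max {|a|_p, |a|_{2,w}}`, the element with coordinates `a` being identified with
the pair `(a, w·a)`. -/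
def XpwMod (p : ℝ) (w : ℕ → ℝ) : Submodule ℝ (SeqP p × Seq2) where
  carrier := {z | ∀ n, (z.2 : ℕ → ℝ) n = w n * (z.1 : ℕ → ℝ) n}
  add_mem' := by
    intro a b ha hb n
    simp only [Prod.fst_add, Prod.snd_add, lp.coeFn_add, Pi.add_apply, ha n, hb n]
    ring
  zero_mem' := by
    intro n
    simp
  smul_mem' := by
    intro c a ha n
    simp only [Prod.smul_fst, Prod.smul_snd, lp.coeFn_smul, Pi.smul_apply, ha n,
      smul_eq_mul]
    ring

/-- The space `X_{p,w}` with its natural norm `‖a‖ = max {|a|_p, |a|_{2,w}}`. -/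
def Xpw (p : ℝ) (w : ℕ → ℝ) : Type := ↥(XpwMod p w)

variable {p : ℝ} {w : ℕ → ℝ}

instance [Fact (1 ≤ ENNReal.ofReal p)] : NormedAddCommGroup (Xpw p w) :=
  inferInstanceAs (NormedAddCommGroup ↥(XpwMod p w))

instance [Fact (1 ≤ ENNReal.ofReal p)] : NormedSpace ℝ (Xpw p w) :=
  inferInstanceAs (NormedSpace ℝ ↥(XpwMod p w))

/-- The pair of coordinates (in `ℓ_p` and in weighted `ℓ_2`) of an element of `X_{p,w}`. -/
def Xpw.pair (x : Xpw p w) : SeqP p × Seq2 := (show ↥(XpwMod p w) from x).val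

/-- The underlying sequence of coordinates of an element of `X_{p,w}`. -/
def seq (x : Xpw p w) : ℕ → ℝ := (Xpw.pair x).1

/-- `|x|_p` for `x ∈ X_{p,w}`. -/
def nrmP (x : Xpw p w) : ℝ := ‖(Xpw.pair x).1‖

/-- `|x|_2 = |x|_{2,w}` for `x ∈ X_{p,w}`. -/
def nrm2 (x : Xpw p w) : ℝ := ‖(Xpw.pair x).2‖

/-- The ratio `r(x) = |x|_2 / |x|_p`. -/
def ratio (x : Xpw p w) : ℝ := nrm2 x / nrmP x

/-- `ω(E) = ∑_{n ∈ E} w_n^{2p/(p-2)}`. -/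
def omegaE (p : ℝ) (w : ℕ → ℝ) (E : Set ℕ) : ℝ :=
  ∑' n : E, w (n : ℕ) ^ (2 * p / (p - 2))

/-- The pairing `⟨x, y⟩ = ∑_n x_n y_n w_n²`. -/
def pairW (w : ℕ → ℝ) (x y : Xpw p w) : ℝ :=
  ∑' n, seq x n * seq y n * w n ^ 2

/-- `w` is a weight sequence suitable for Rosenthal's space `X_p`: it is positive and for
every `ε > 0`, `∑_{w_n < ε} w_n^{2p/(p-2)} = ∞`. -/
def IsXpWeight (p : ℝ) (w : ℕ → ℝ) : Prop :=
  (∀ n, 0 < w n) ∧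
    ∀ ε : ℝ, 0 < ε →
      (∑' n : {n : ℕ | w n < ε}, ENNReal.ofReal (w (n : ℕ) ^ (2 * p / (p - 2)))) = ⊤

theorem memℓp_indicator {q : ℝ≥0∞} (E : Set ℕ) {f : ℕ → ℝ} (hf : Memℓp f q) :
    Memℓp (E.indicator f) q := by
  rcases ENNReal.trichotomy q with hq | hq | hq
  · subst hq
    refine memℓp_zero ((memℓp_zero_iff.mp hf).subset ?_)
    intro i hi
    simp only [Set.mem_setOf_eq] at hi ⊢
    intro h
    exact hi (by simp [Set.indicator_apply, h])
  · subst hq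
    obtain ⟨C, hC⟩ := (memℓp_infty_iff.mp hf)
    refine memℓp_infty ⟨C, ?_⟩
    rintro x ⟨i, rfl⟩
    exact le_trans (norm_indicator_le_norm_self f i) (hC ⟨i, rfl⟩)
  · refine memℓp_gen (Summable.of_nonneg_of_le (fun i => ?_) (fun i => ?_)
      (hf.summable hq))
    · positivity
    · exact Real.rpow_le_rpow (norm_nonneg _) (norm_indicator_le_norm_self f i) hq.le

/-- The restriction `x ↦ x_{|E}` of elements of `X_{p,w}` to a set `E` of coordinates. -/
def restrict (E : Set ℕ) (x : Xpw p w) : Xpw p w :=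
  show ↥(XpwMod p w) from
  ⟨(⟨E.indicator ((Xpw.pair x).1 : ℕ → ℝ), memℓp_indicator E (lp.memℓp (Xpw.pair x).1)⟩,
    ⟨E.indicator ((Xpw.pair x).2 : ℕ → ℝ), memℓp_indicator E (lp.memℓp (Xpw.pair x).2)⟩), by
    intro n
    by_cases hn : n ∈ E
    · have h : ((Xpw.pair x).2 : ℕ → ℝ) n = w n * ((Xpw.pair x).1 : ℕ → ℝ) n :=
        (show ↥(XpwMod p w) from x).2 n
      simpa [Set.indicator_of_mem hn] using h
    · simp [Set.indicator_of_notMem hn]⟩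


theorem clark_scalar {p a b c d : ℝ} (hp : 2 < p) (ha : 0 ≤ a) (hb : 0 ≤ b) (hc : 0 ≤ c) (hd : 0 ≤ d)
    (h : a ^ 2 + b ^ 2 = 2 * (c ^ 2 + d ^ 2)) :
    a ^ p + b ^ p ≤ 2 ^ (p - 1) * (c ^ p + d ^ p) := by
  have h2 : ∀ x : ℝ, 0 ≤ x → x ^ p = (x ^ 2) ^ (p / 2) := by
    intro x hx
    rw [← Real.rpow_natCast, ← Real.rpow_mul hx]
    congr 1; push_cast; ring
  have hp2 : 1 ≤ p / 2 := by linarith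
  rw [h2 a ha, h2 b hb, h2 c hc, h2 d hd]
  have e1 := Real.add_rpow_le_rpow_add (sq_nonneg a) (sq_nonneg b) hp2
  have e2 : (c ^ 2 + d ^ 2) ^ (p / 2) ≤ 2 ^ (p / 2 - 1) * ((c ^ 2) ^ (p / 2) + (d ^ 2) ^ (p / 2)) := by
    lift c to NNReal using hc
    lift d to NNReal using hd
    have := NNReal.rpow_add_le_mul_rpow_add_rpow (c ^ 2) (d ^ 2) hp2
    exact_mod_cast this
  rw [h, Real.mul_rpow (by norm_num) (by positivity)] at e1
  have e3 : (2:ℝ) ^ (p - 1) = 2 ^ (p / 2) * 2 ^ (p / 2 - 1) := by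
    rw [← Real.rpow_add (by norm_num)]; congr 1; ring
  rw [e3, mul_assoc]
  refine e1.trans ?_
  gcongr

theorem clark_inner {E : Type*} [NormedAddCommGroup E] [InnerProductSpace ℝ E] {p : ℝ} (hp : 2 < p)
    (x y : E) : ‖x + y‖ ^ p + ‖x - y‖ ^ p ≤ 2 ^ (p - 1) * (‖x‖ ^ p + ‖y‖ ^ p) := by
  refine clark_scalar hp (norm_nonneg _) (norm_nonneg _) (norm_nonneg _) (norm_nonneg _) ?_
  have := parallelogram_law_with_norm ℝ x y
  nlinarith

theorem clark_lp {p : ℝ} (hp : 2 < p) [Fact (1 ≤ ENNReal.ofReal p)]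
    (x y : lp (fun _ : ℕ => ℝ) (ENNReal.ofReal p)) :
    ‖x + y‖ ^ p + ‖x - y‖ ^ p ≤ 2 ^ (p - 1) * (‖x‖ ^ p + ‖y‖ ^ p) := by
  have hp0 : (ENNReal.ofReal p).toReal = p := ENNReal.toReal_ofReal (by linarith)
  have hs : ∀ f : lp (fun _ : ℕ => ℝ) (ENNReal.ofReal p), HasSum (fun i => ‖f i‖ ^ p) (‖f‖ ^ p) := by
    intro f
    have := lp.hasSum_norm (p := ENNReal.ofReal p) (by rw [hp0]; linarith) f
    rwa [hp0] at this
  refine hasSum_le (fun i => ?_) ((hs (x + y)).add (hs (x - y))) (((hs x).add (hs y)).mul_left _)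
  exact clark_inner hp (x i) (y i)

theorem signs_exist {E : Type*} [AddCommGroup E] [Module ℝ E] (N : E → ℝ) (c : ℝ)
    (hN : ∀ x y, N (x + y) + N (x - y) ≤ c * (N x + N y)) (hc : 0 ≤ c)
    (z : ℕ → E) (hz : ∀ n, N (z n) ≤ 2) (k : ℕ) :
    ∀ F : Finset ℕ, F.card = 2 ^ k → ∃ θ : ℕ → ℝ, (∀ n, θ n = 1 ∨ θ n = -1) ∧
      N (∑ n ∈ F, θ n • z n) ≤ 2 * c ^ k := by
  classical
  induction k with
  | zero =>
    intro F hF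
    obtain ⟨a, rfl⟩ := Finset.card_eq_one.mp (by simpa using hF)
    exact ⟨fun _ => 1, fun _ => Or.inl rfl, by simpa using hz a⟩
  | succ k ih =>
    intro F hF
    obtain ⟨A, hAF, hA⟩ := Finset.exists_subset_card_eq (s := F) (n := 2 ^ k) (by rw [hF, pow_succ]; omega)
    have hB : (F \ A).card = 2 ^ k := by
      rw [Finset.card_sdiff_of_subset hAF, hF, hA, pow_succ]; omega
    obtain ⟨θ, h1, h2⟩ := ih A hA
    obtain ⟨ψ, h3, h4⟩ := ih _ hB
    have key : ∀ s : ℝ, ∑ n ∈ F, (if n ∈ A then θ n else s * ψ n) • z n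
        = ∑ n ∈ A, θ n • z n + s • ∑ n ∈ F \ A, ψ n • z n := by
      intro s
      rw [← Finset.sum_sdiff hAF, add_comm, Finset.smul_sum]
      congr 1
      · exact Finset.sum_congr rfl fun n hn => by simp [hn]
      · exact Finset.sum_congr rfl fun n hn => by
          simp [(Finset.mem_sdiff.mp hn).2, mul_smul]
    have h5 := hN (∑ n ∈ A, θ n • z n) (∑ n ∈ F \ A, ψ n • z n)
    have h6 : c * (N (∑ n ∈ A, θ n • z n) + N (∑ n ∈ F \ A, ψ n • z n)) ≤ c * (2 * c ^ k + 2 * c ^ k) := by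
      gcongr
    have h7 : c * (2 * c ^ k + 2 * c ^ k) = 2 * (2 * c ^ (k+1)) := by ring
    rcases le_total (N (∑ n ∈ A, θ n • z n + ∑ n ∈ F \ A, ψ n • z n))
      (N (∑ n ∈ A, θ n • z n - ∑ n ∈ F \ A, ψ n • z n)) with h | h
    · refine ⟨fun n => if n ∈ A then θ n else 1 * ψ n, fun n => ?_, ?_⟩
      · dsimp only
        split_ifs
        · exact h1 n
        · simpa using h3 n
      · rw [key, one_smul]; linarith
    · refine ⟨fun n => if n ∈ A then θ n else (-1) * ψ n, fun n => ?_, ?_⟩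
      · dsimp only
        split_ifs
        · exact h1 n
        · rcases h3 n with h | h <;> simp [h]
      · rw [key, neg_one_smul, ← sub_eq_add_neg]; linarith

theorem weak_null {E : Type*} [NormedAddCommGroup E] [NormedSpace ℝ E] {p : ℝ} (hp : 2 < p)
    (N : E → ℝ)
    (hN : ∀ x y, N (x + y) + N (x - y) ≤ 2 ^ (p - 1) * (N x + N y))
    (hN1 : ∀ x, ‖x‖ ^ p ≤ N x)
    (z : ℕ → E) (hz : ∀ n, N (z n) ≤ 2) (K : ℝ) (hK0 : 0 < K)
    (hK : ∀ a θ : ℕ → ℝ, (∀ n, θ n = 1 ∨ θ n = -1) → ∀ s : Finset ℕ,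
      ‖∑ n ∈ s, (θ n * a n) • z n‖ ≤ K * ‖∑ n ∈ s, a n • z n‖) (f : E →L[ℝ] ℝ) :
    Filter.Tendsto (fun n => f (z n)) Filter.atTop (nhds 0) := by
  rw [Metric.tendsto_atTop]
  by_contra! hcon
  obtain ⟨c, hc, hcon⟩ := hcon
  simp only [dist_zero_right] at hcon
  have hinf : {n | c ≤ ‖f (z n)‖}.Infinite := by
    refine Set.infinite_of_not_bddAbove ?_
    rintro ⟨B, hB⟩
    obtain ⟨n, hn, h⟩ := hcon (B + 1)
    have := hB h
    omega
  have main : ∀ k : ℕ, (c / ((‖f‖ + 1) * K)) ^ p ≤ 2 * (1 / 2) ^ k := by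
    intro k
    obtain ⟨F, hF, hcard⟩ := hinf.exists_subset_card_eq (2 ^ k)
    obtain ⟨θ, h1, h2⟩ := signs_exist N _ hN (by positivity) z hz k F hcard
    let s : ℕ → ℝ := fun n => if 0 ≤ f (z n) then 1 else -1
    have hs : ∀ n, s n = 1 ∨ s n = -1 := fun n => by
      dsimp only [s]; split_ifs <;> simp
    have h3 := hK θ (fun n => s n * θ n) (fun n => by
      rcases hs n with h | h <;> rcases h1 n with h' | h' <;> simp [h, h']) F
    have h4 : ∀ n, s n * θ n * θ n = s n := fun n => by
      rcases h1 n with h' | h' <;> simp [h']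
    simp only [h4] at h3
    have h5 : (2:ℝ) ^ k * c ≤ f (∑ n ∈ F, s n • z n) := by
      rw [map_sum]
      have : ∑ n ∈ F, c ≤ ∑ n ∈ F, f (s n • z n) := by
        refine Finset.sum_le_sum fun n hn => ?_
        have h : c ≤ ‖f (z n)‖ := hF hn
        rw [Real.norm_eq_abs] at h
        simp only [map_smul, smul_eq_mul, s]
        split_ifs with h0
        · rw [abs_of_nonneg h0] at h; linarith
        · rw [abs_of_neg (by linarith)] at h; linarith
      rwa [Finset.sum_const, hcard, nsmul_eq_mul, Nat.cast_pow, Nat.cast_ofNat] at this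
    have h6 : f (∑ n ∈ F, s n • z n) ≤ (‖f‖ + 1) * (K * ‖∑ n ∈ F, θ n • z n‖) := by
      refine (le_abs_self _).trans ((f.le_opNorm _).trans ?_)
      gcongr
      linarith
    have h7 : 2 ^ k * (c / ((‖f‖ + 1) * K)) ≤ ‖∑ n ∈ F, θ n • z n‖ := by
      rw [← mul_div_assoc, div_le_iff₀ (by positivity)]
      nlinarith
    have h8 := (Real.rpow_le_rpow (by positivity) h7 (by linarith : 0 ≤ p)).trans ((hN1 _).trans h2)
    rw [Real.mul_rpow (by positivity) (by positivity)] at h8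
    have h9 : ((2:ℝ) ^ k) ^ p = (2 ^ (p - 1)) ^ k * 2 ^ k := by
      rw [← mul_pow, ← Real.rpow_add_one (by norm_num), sub_add_cancel, ← Real.rpow_natCast, ← Real.rpow_natCast,
        ← Real.rpow_mul (by norm_num), ← Real.rpow_mul (by norm_num), mul_comm]
    rw [h9, mul_assoc, mul_comm 2] at h8
    have h10 := le_of_mul_le_mul_left h8 (by positivity)
    rw [one_div, inv_pow, ← div_eq_mul_inv, le_div_iff₀ (by positivity)]
    linarith
  have hlim : Filter.Tendsto (fun k : ℕ => 2 * (1 / 2 : ℝ) ^ k) Filter.atTop (nhds (2 * 0)) :=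
    (tendsto_pow_atTop_nhds_zero_of_lt_one (by norm_num) (by norm_num)).const_mul 2
  have := ge_of_tendsto' hlim main
  have h2 : 0 < (c / ((‖f‖ + 1) * K)) ^ p := by positivity
  linarith

theorem sign_avg {E : Type*} [NormedAddCommGroup E] [InnerProductSpace ℝ E] (x : ℕ → E) (F : Finset ℕ) :
    ∑ T ∈ F.powerset, ‖∑ i ∈ F, (if i ∈ T then (1:ℝ) else -1) • x i‖ ^ 2
      = 2 ^ F.card * ∑ i ∈ F, ‖x i‖ ^ 2 := by
  classical
  induction F using Finset.induction_on with
  | empty => simp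
  | insert a F ha ih =>
    rw [Finset.sum_powerset_insert ha, ← Finset.sum_add_distrib, Finset.card_insert_of_notMem ha,
      Finset.sum_insert ha, pow_succ]
    have : ∀ T ∈ F.powerset, ‖∑ i ∈ insert a F, (if i ∈ T then (1:ℝ) else -1) • x i‖ ^ 2 +
        ‖∑ i ∈ insert a F, (if i ∈ insert a T then (1:ℝ) else -1) • x i‖ ^ 2 =
        2 * ‖∑ i ∈ F, (if i ∈ T then (1:ℝ) else -1) • x i‖ ^ 2 + 2 * ‖x a‖ ^ 2 := by
      intro T hT
      have haT : a ∉ T := fun h => ha (Finset.mem_powerset.mp hT h)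
      rw [Finset.sum_insert ha, Finset.sum_insert ha]
      have : ∑ i ∈ F, (if i ∈ insert a T then (1:ℝ) else -1) • x i
          = ∑ i ∈ F, (if i ∈ T then (1:ℝ) else -1) • x i := by
        refine Finset.sum_congr rfl fun i hi => ?_
        have : i ≠ a := fun h => ha (h ▸ hi)
        simp [this]
      rw [this]
      simp only [haT, if_false, Finset.mem_insert_self, if_true, one_smul, neg_one_smul]
      have := parallelogram_law_with_norm ℝ (∑ i ∈ F, (if i ∈ T then (1:ℝ) else -1) • x i) (x a)
      rw [neg_add_eq_sub, add_comm (x a)]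
      nlinarith
    rw [Finset.sum_congr rfl this, Finset.sum_add_distrib, ← Finset.mul_sum, ih, Finset.sum_const,
      Finset.card_powerset]
    simp
    ring

theorem hump_step {p : ℝ} (hp : 2 < p) [Fact (1 ≤ ENNReal.ofReal p)]
    (v : ℕ → lp (fun _ : ℕ => ℝ) (ENNReal.ofReal p)) (C : ℝ) (hC : ∀ n, ‖v n‖ ≤ C)
    (hv : ∀ k, Filter.Tendsto (fun n => v n k) Filter.atTop (nhds 0))
    (x : lp (fun _ : ℕ => ℝ) (ENNReal.ofReal p)) (R : ℝ) (hR : 0 ≤ R) (hxR : ‖x‖ ^ p + C ^ p < R ^ p) :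
    ∀ᶠ n in Filter.atTop, ‖x + v n‖ ≤ R := by
  have hp0 : (ENNReal.ofReal p).toReal = p := ENNReal.toReal_ofReal (by linarith)
  have hpos : 0 < (ENNReal.ofReal p).toReal := by rw [hp0]; linarith
  have hC0 : 0 ≤ C := (norm_nonneg _).trans (hC 0)
  set ρ := (‖x‖ ^ p + C ^ p) ^ (1 / p) with hρ
  have hρp : ρ ^ p = ‖x‖ ^ p + C ^ p := by
    rw [hρ, ← Real.rpow_mul (by positivity), one_div_mul_cancel (by linarith), Real.rpow_one]
  have hρ0 : 0 ≤ ρ := by positivity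
  have hρR : ρ < R := by
    rw [← hρp] at hxR
    exact lt_of_not_ge fun h => absurd (Real.rpow_le_rpow hR h (by linarith : 0 ≤ p)) (not_le.mpr hxR)
  have hδ : 0 < (R - ρ) / 2 := by linarith
  have hsum := lp.hasSum_single (ENNReal.ofReal_ne_top (r := p)) x
  obtain ⟨s, hs⟩ := (hsum.eventually (Metric.ball_mem_nhds x hδ)).exists
  have hh : Filter.Tendsto (fun n => ∑ i ∈ s, lp.single (ENNReal.ofReal p) i (v n i)) Filter.atTop
      (nhds (0 : lp (fun _ : ℕ => ℝ) (ENNReal.ofReal p))) := by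
    have : (0 : lp (fun _ : ℕ => ℝ) (ENNReal.ofReal p)) = ∑ i ∈ s, 0 := by simp
    rw [this]
    refine tendsto_finsetSum _ fun i _ => ?_
    rw [tendsto_zero_iff_norm_tendsto_zero]
    have := (hv i).norm
    simpa [lp.norm_single (p := ENNReal.ofReal p) (by positivity)] using this
  filter_upwards [hh.eventually (Metric.ball_mem_nhds _ hδ)] with n hn
  set x' := ∑ i ∈ s, lp.single (ENNReal.ofReal p) i (x i) with hx'
  set h := ∑ i ∈ s, lp.single (ENNReal.ofReal p) i (v n i) with hhdef
  rw [dist_eq_norm] at hs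
  rw [dist_eq_norm, sub_zero] at hn
  set g := x' + (v n - h) with hg
  have hgi : ∀ i ∈ s, g i = x i := by
    intro i hi
    have e1 : ∀ y : lp (fun _ : ℕ => ℝ) (ENNReal.ofReal p),
        (∑ j ∈ s, lp.single (ENNReal.ofReal p) j (y j) : lp (fun _ : ℕ => ℝ) (ENNReal.ofReal p)) i = y i := by
      intro y
      rw [lp.coeFn_sum, Finset.sum_apply, Finset.sum_eq_single i]
      · simp
      · intro j _ hj; simp [lp.single_apply, Pi.single_apply, hj.symm]
      · intro h; exact absurd hi h
    simp only [hg, lp.coeFn_add, lp.coeFn_sub, Pi.add_apply, Pi.sub_apply, hx', hhdef, e1]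
    ring
  have hgs : ∑ i ∈ s, lp.single (ENNReal.ofReal p) i (g i) = x' :=
    Finset.sum_congr rfl fun i hi => by rw [hgi i hi]
  have n1 := lp.norm_sub_norm_compl_sub_single hpos g s
  have n2 := lp.norm_sub_norm_compl_sub_single hpos (v n) s
  have n3 := lp.sum_rpow_le_norm_rpow hpos x s
  rw [hgs, Finset.sum_congr rfl (fun i hi => by rw [hgi i hi])] at n1
  rw [hp0] at n1 n2 n3
  have e2 : g - x' = v n - h := by rw [hg]; abel
  rw [e2] at n1
  have n4 : 0 ≤ ∑ i ∈ s, ‖v n i‖ ^ p := by positivity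
  have n5 : ‖v n‖ ^ p ≤ C ^ p := Real.rpow_le_rpow (norm_nonneg _) (hC n) (by linarith)
  have n6 : ‖g‖ ^ p ≤ ρ ^ p := by rw [hρp]; linarith
  have n7 : ‖g‖ ≤ ρ := (Real.rpow_le_rpow_iff (norm_nonneg _) hρ0 (by linarith)).mp n6
  have e3 : x + v n = g - (x' - x) + h := by rw [hg]; abel
  rw [e3]
  have t1 := norm_add_le (g - (x' - x)) h
  have t2 := norm_sub_le g (x' - x)
  linarith

theorem hump {p : ℝ} (hp : 2 < p) [Fact (1 ≤ ENNReal.ofReal p)]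
    (v : ℕ → lp (fun _ : ℕ => ℝ) (ENNReal.ofReal p)) (C : ℝ) (hC : ∀ n, ‖v n‖ ≤ C)
    (hv : ∀ k, Filter.Tendsto (fun n => v n k) Filter.atTop (nhds 0)) (n0 : ℕ) (N : ℕ) :
    ∃ F : Finset ℕ, F.card = N ∧ (∀ n ∈ F, n0 ≤ n) ∧ ∀ T ⊆ F,
      ‖∑ i ∈ F, (if i ∈ T then (1:ℝ) else -1) • v i‖ ^ p ≤ N * (C ^ p + 1) := by
  classical
  have hC0 : 0 ≤ C := (norm_nonneg _).trans (hC 0)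
  induction N with
  | zero =>
    refine ⟨∅, rfl, by simp, fun T hT => ?_⟩
    simp [Real.zero_rpow (by linarith : p ≠ 0)]
  | succ N ih =>
    obtain ⟨F, hF, hn0, hb⟩ := ih
    set R : ℝ := ((N + 1 : ℝ) * (C ^ p + 1)) ^ (1 / p) with hRdef
    have hRp : R ^ p = (N + 1 : ℝ) * (C ^ p + 1) := by
      rw [hRdef, ← Real.rpow_mul (by positivity), one_div_mul_cancel (by linarith), Real.rpow_one]
    have hR0 : 0 ≤ R := by positivity
    have ev : ∀ᶠ n in Filter.atTop, ∀ T ∈ F.powerset,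
        ‖(∑ i ∈ F, (if i ∈ T then (1:ℝ) else -1) • v i) + v n‖ ≤ R ∧
        ‖(∑ i ∈ F, (if i ∈ T then (1:ℝ) else -1) • v i) - v n‖ ≤ R := by
      rw [Filter.eventually_all_finset]
      intro T hT
      have h1 := hb T (Finset.mem_powerset.mp hT)
      have h2 : ‖∑ i ∈ F, (if i ∈ T then (1:ℝ) else -1) • v i‖ ^ p + C ^ p < R ^ p := by
        rw [hRp]; linarith
      refine (hump_step hp v C hC hv _ R hR0 h2).and ?_
      have := hump_step hp (fun n => - v n) C (by simpa using hC)
        (fun k => by simpa using (hv k).neg) _ R hR0 h2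
      simpa [sub_eq_add_neg] using this
    obtain ⟨n, hn, hn1, hn2⟩ := (ev.and ((Filter.eventually_ge_atTop n0).and
      (Filter.eventually_gt_atTop (F.sup id)))).exists
    have hnF : n ∉ F := fun h => absurd (Finset.le_sup (f := id) h) (not_le.mpr hn2)
    refine ⟨insert n F, by rw [Finset.card_insert_of_notMem hnF, hF], ?_, ?_⟩
    · intro m hm
      rcases Finset.mem_insert.mp hm with rfl | h
      · exact hn1
      · exact hn0 m h
    · intro T hT
      have := hn (T.erase n) (by
        rw [Finset.mem_powerset]
        intro i hi
        rw [Finset.mem_erase] at hi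
        exact (Finset.mem_insert.mp (hT hi.2)).resolve_left hi.1)
      have e : ∑ i ∈ F, (if i ∈ T.erase n then (1:ℝ) else -1) • v i
          = ∑ i ∈ F, (if i ∈ T then (1:ℝ) else -1) • v i := by
        refine Finset.sum_congr rfl fun i hi => ?_
        have : i ≠ n := fun h => hnF (h ▸ hi)
        simp [this]
      rw [e] at this
      push_cast
      rw [← hRp]
      refine Real.rpow_le_rpow (norm_nonneg _) ?_ (by linarith)
      rw [Finset.sum_insert hnF]
      split_ifs
      · rw [one_smul, add_comm]; exact this.1
      · rw [neg_one_smul, neg_add_eq_sub]; exact this.2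

theorem coord_bound {E : Type*} [NormedAddCommGroup E] [NormedSpace ℝ E]
    (z : ℕ → E) (hz1 : ∀ n, ‖z n‖ = 1) (K : ℝ) (hK1 : 1 ≤ K)
    (hK : ∀ a θ : ℕ → ℝ, (∀ n, θ n = 1 ∨ θ n = -1) → ∀ s : Finset ℕ,
      ‖∑ n ∈ s, (θ n * a n) • z n‖ ≤ K * ‖∑ n ∈ s, a n • z n‖)
    (a : ℕ → ℝ) (s : Finset ℕ) (m : ℕ) (hm : m ∈ s) :
    |a m| ≤ K * ‖∑ n ∈ s, a n • z n‖ := by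
  classical
  have h := hK a (fun n => if n = m then 1 else -1) (fun n => by split_ifs <;> simp) s
  have e : ∑ n ∈ s, ((if n = m then (1:ℝ) else -1) * a n) • z n + ∑ n ∈ s, a n • z n = (2 * a m) • z m := by
    rw [← Finset.sum_add_distrib, Finset.sum_eq_single m]
    · simp [← add_smul, two_mul]
    · intro b _ hb; simp [hb]
    · intro h; exact absurd hm h
  have h2 := norm_add_le (∑ n ∈ s, ((if n = m then (1:ℝ) else -1) * a n) • z n) (∑ n ∈ s, a n • z n)
  rw [e, norm_smul, hz1, mul_one, Real.norm_eq_abs, abs_mul, abs_two] at h2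
  nlinarith [norm_nonneg (∑ n ∈ s, a n • z n)]

theorem biorth {E : Type*} [NormedAddCommGroup E] [NormedSpace ℝ E]
    (z : ℕ → E) (hz1 : ∀ n, ‖z n‖ = 1) (K : ℝ) (hK1 : 1 ≤ K)
    (hK : ∀ a θ : ℕ → ℝ, (∀ n, θ n = 1 ∨ θ n = -1) → ∀ s : Finset ℕ,
      ‖∑ n ∈ s, (θ n * a n) • z n‖ ≤ K * ‖∑ n ∈ s, a n • z n‖) :
    ∃ g : ℕ → (E →L[ℝ] ℝ), (∀ j i, g j (z i) = if i = j then 1 else 0) ∧ ∀ j, ‖g j‖ ≤ K := by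
  classical
  have hli : LinearIndependent ℝ z := by
    rw [linearIndependent_iff']
    intro s a h0 i hi
    have := coord_bound z hz1 K hK1 hK a s i hi
    rw [h0, norm_zero, mul_zero] at this
    exact abs_eq_zero.mp (le_antisymm this (abs_nonneg _))
  have key : ∀ j, ∃ g : E →L[ℝ] ℝ, (∀ i, g (z i) = if i = j then 1 else 0) ∧ ‖g‖ ≤ K := by
    intro j
    let B := Module.Basis.span hli
    have hB : ∀ i, B.coord j ⟨z i, Submodule.subset_span ⟨i, rfl⟩⟩ = if i = j then 1 else 0 := by
      intro i
      have : (⟨z i, Submodule.subset_span ⟨i, rfl⟩⟩ : Submodule.span ℝ (Set.range z)) = B i :=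
        (Module.Basis.span_apply hli i).symm
      rw [this]
      simp [Finsupp.single_apply]
    have hbd : ∀ y : Submodule.span ℝ (Set.range z), ‖B.coord j y‖ ≤ K * ‖y‖ := by
      intro y
      by_cases hj : j ∈ (B.repr y).support
      · have h1 := coord_bound z hz1 K hK1 hK (B.repr y) (B.repr y).support j hj
        have h2 : ∑ n ∈ (B.repr y).support, B.repr y n • z n = (y : E) := by
          have := congrArg (Subtype.val) (B.linearCombination_repr y)
          rw [Finsupp.linearCombination_apply, Finsupp.sum] at this
          rw [← this]
          simp [B, Module.Basis.span_apply]
        rw [h2] at h1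
        exact h1
      · have : B.coord j y = 0 := by simpa using hj
        rw [this, norm_zero]
        have := norm_nonneg y
        nlinarith
    obtain ⟨g, hg1, hg2⟩ := exists_extension_norm_eq (Submodule.span ℝ (Set.range z))
      ((B.coord j).mkContinuous K hbd)
    refine ⟨g, fun i => ?_, ?_⟩
    · have := hg1 ⟨z i, Submodule.subset_span ⟨i, rfl⟩⟩
      rw [LinearMap.mkContinuous_apply, hB] at this
      exact this
    · rw [hg2]
      exact LinearMap.mkContinuous_norm_le _ (by linarith) _
  choose g hg using key
  exact ⟨g, fun j => (hg j).1, fun j => (hg j).2⟩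

theorem lower2 {E H : Type*} [NormedAddCommGroup E] [NormedSpace ℝ E]
    [NormedAddCommGroup H] [InnerProductSpace ℝ H] (J : E →ₗ[ℝ] H) (hJ : ∀ x, ‖J x‖ ≤ ‖x‖)
    (z : ℕ → E) (K : ℝ) (hK0 : 0 ≤ K)
    (hK : ∀ a θ : ℕ → ℝ, (∀ n, θ n = 1 ∨ θ n = -1) → ∀ s : Finset ℕ,
      ‖∑ n ∈ s, (θ n * a n) • z n‖ ≤ K * ‖∑ n ∈ s, a n • z n‖)
    (g : ℕ → (E →L[ℝ] ℝ)) (hg : ∀ j i, g j (z i) = if i = j then 1 else 0)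
    (F : Finset ℕ) (y : E) (hy : y ∈ (Submodule.span ℝ (Set.range z)).topologicalClosure) :
    ∑ j ∈ F, (g j y) ^ 2 * ‖J (z j)‖ ^ 2 ≤ K ^ 2 * ‖y‖ ^ 2 := by
  classical
  have hcl : IsClosed {y : E | ∑ j ∈ F, (g j y) ^ 2 * ‖J (z j)‖ ^ 2 ≤ K ^ 2 * ‖y‖ ^ 2} :=
    isClosed_le (by fun_prop) (by fun_prop)
  refine closure_minimal ?_ hcl hy
  intro y hy
  obtain ⟨c, rfl⟩ := Finsupp.mem_span_range_iff_exists_finsupp.mp hy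
  have e : (c.sum fun i a => a • z i) = ∑ i ∈ c.support ∪ F, c i • z i := by
    rw [Finsupp.sum]
    refine Finset.sum_subset Finset.subset_union_left fun i _ hi => ?_
    rw [Finsupp.notMem_support_iff.mp hi, zero_smul]
  simp only [Set.mem_setOf_eq, e]
  set s := c.support ∪ F
  have hgj : ∀ j ∈ F, g j (∑ i ∈ s, c i • z i) = c j := by
    intro j hj
    simp only [map_sum, map_smul, hg, smul_eq_mul, mul_ite, mul_one, mul_zero]
    rw [Finset.sum_ite_eq' s j]
    simp [s, hj]
  rw [Finset.sum_congr rfl fun j hj => by rw [hgj j hj]]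
  have h1 : ∑ j ∈ F, (c j) ^ 2 * ‖J (z j)‖ ^ 2 ≤ ∑ j ∈ s, ‖J (c j • z j)‖ ^ 2 := by
    refine (Finset.sum_le_sum_of_subset_of_nonneg (t := s) Finset.subset_union_right
      fun i _ _ => by positivity).trans (le_of_eq ?_)
    refine Finset.sum_congr rfl fun j _ => ?_
    rw [map_smul, norm_smul, mul_pow, Real.norm_eq_abs, sq_abs]
  have h2 := sign_avg (fun j => J (c j • z j)) s
  have h3 : ∑ T ∈ s.powerset, ‖∑ i ∈ s, (if i ∈ T then (1:ℝ) else -1) • J (c i • z i)‖ ^ 2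
      ≤ ∑ T ∈ s.powerset, K ^ 2 * ‖∑ i ∈ s, c i • z i‖ ^ 2 := by
    refine Finset.sum_le_sum fun T _ => ?_
    rw [← mul_pow]
    refine pow_le_pow_left₀ (norm_nonneg _) ?_ 2
    have := hK c (fun i => if i ∈ T then (1:ℝ) else -1) (fun n => by split_ifs <;> simp) s
    refine le_trans ?_ this
    refine le_trans (le_of_eq ?_) (hJ _)
    simp only [map_sum, map_smul, mul_smul]
  rw [h2, Finset.sum_const, Finset.card_powerset, nsmul_eq_mul, Nat.cast_pow, Nat.cast_ofNat] at h3
  exact h1.trans (le_of_mul_le_mul_left h3 (by positivity))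

theorem young {a b η : ℝ} (hη : 0 < η) : (a + b) ^ 2 ≤ (1 + η) * a ^ 2 + (1 + 1 / η) * b ^ 2 := by
  have : (1 + η) * a ^ 2 + (1 + 1 / η) * b ^ 2 - (a + b) ^ 2 = (η * a - b) ^ 2 / η := by
    field_simp; ring
  have h2 : 0 ≤ (η * a - b) ^ 2 / η := by positivity
  linarith

theorem avg1 {H : Type*} [NormedAddCommGroup H] [InnerProductSpace ℝ H]
    (u z v : ℕ → H) (huv : ∀ n, z n = u n + v n) (F : Finset ℕ) (M η : ℝ) (hη : 0 < η)
    (hM : ∀ T ⊆ F, ‖∑ i ∈ F, (if i ∈ T then (1:ℝ) else -1) • v i‖ ^ 2 ≤ M) :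
    ∑ i ∈ F, ‖u i‖ ^ 2 ≤ (1 + η) * ∑ i ∈ F, ‖z i‖ ^ 2 + (1 + 1 / η) * M := by
  have h1 := sign_avg u F
  have h2 := sign_avg z F
  have h3 : ∑ T ∈ F.powerset, ‖∑ i ∈ F, (if i ∈ T then (1:ℝ) else -1) • u i‖ ^ 2 ≤
      ∑ T ∈ F.powerset, ((1 + η) * ‖∑ i ∈ F, (if i ∈ T then (1:ℝ) else -1) • z i‖ ^ 2 + (1 + 1 / η) * M) := by
    refine Finset.sum_le_sum fun T hT => ?_
    have e : ∑ i ∈ F, (if i ∈ T then (1:ℝ) else -1) • u i =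
        ∑ i ∈ F, (if i ∈ T then (1:ℝ) else -1) • z i - ∑ i ∈ F, (if i ∈ T then (1:ℝ) else -1) • v i := by
      simp only [huv, smul_add, Finset.sum_add_distrib, add_sub_cancel_right]
    rw [e]
    refine (pow_le_pow_left₀ (norm_nonneg _) (norm_sub_le _ _) 2).trans ((young hη).trans ?_)
    have := hM T (Finset.mem_powerset.mp hT)
    gcongr
  rw [h1, Finset.sum_add_distrib, ← Finset.mul_sum, h2, Finset.sum_const, Finset.card_powerset,
    nsmul_eq_mul, Nat.cast_pow, Nat.cast_ofNat] at h3
  refine le_of_mul_le_mul_left (h3.trans (le_of_eq ?_)) (by positivity : (0:ℝ) < 2 ^ F.card)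
  ring

theorem avg2 {E : Type*} [NormedAddCommGroup E] [NormedSpace ℝ E]
    (G : ℕ → (E →L[ℝ] ℝ)) (v : ℕ → E) (F : Finset ℕ) (B M : ℝ) (hB : 0 ≤ B)
    (hG : ∀ y, ∑ j ∈ F, (G j y) ^ 2 ≤ B * ‖y‖ ^ 2)
    (hM : ∀ T ⊆ F, ‖∑ i ∈ F, (if i ∈ T then (1:ℝ) else -1) • v i‖ ^ 2 ≤ M) :
    ∑ i ∈ F, (G i (v i)) ^ 2 ≤ B * M := by
  have h1 : ∑ T ∈ F.powerset, ∑ j ∈ F, (G j (∑ i ∈ F, (if i ∈ T then (1:ℝ) else -1) • v i)) ^ 2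
      ≤ ∑ T ∈ F.powerset, B * M := by
    refine Finset.sum_le_sum fun T hT => (hG _).trans ?_
    have := hM T (Finset.mem_powerset.mp hT)
    gcongr
  rw [Finset.sum_comm, Finset.sum_const, Finset.card_powerset, nsmul_eq_mul, Nat.cast_pow, Nat.cast_ofNat] at h1
  refine le_of_mul_le_mul_left (le_trans ?_ h1) (by positivity : (0:ℝ) < 2 ^ F.card)
  rw [Finset.mul_sum]
  refine Finset.sum_le_sum fun j hj => ?_
  have h2 := sign_avg (fun i => G j (v i)) F
  simp only [Real.norm_eq_abs, sq_abs] at h2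
  simp only [map_sum, map_smul]
  rw [h2]
  gcongr
  exact Finset.single_le_sum (f := fun i => (G j (v i)) ^ 2) (fun i _ => sq_nonneg _) hj

theorem final_lim {p a b : ℝ} (hp : 2 < p) (h : ∀ N : ℕ, (N : ℝ) ≤ a * N + b * (N : ℝ) ^ (2 / p)) :
    1 ≤ a := by
  have hlim : Filter.Tendsto (fun N : ℕ => a + b * (N : ℝ) ^ (-(1 - 2 / p))) Filter.atTop (nhds (a + b * 0)) := by
    refine tendsto_const_nhds.add (Filter.Tendsto.const_mul b ?_)
    refine (tendsto_rpow_neg_atTop ?_).comp tendsto_natCast_atTop_atTop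
    rw [sub_pos, div_lt_one (by linarith)]; exact hp
  rw [mul_zero, add_zero] at hlim
  refine ge_of_tendsto hlim ?_
  filter_upwards [Filter.eventually_gt_atTop 0] with N hN
  have hN' : (0:ℝ) < N := by exact_mod_cast hN
  have e : (N:ℝ) ^ (2 / p) = N * (N : ℝ) ^ (-(1 - 2 / p)) := by
    rw [← Real.rpow_one_add' hN'.le]
    · congr 1; ring
    · have : 0 < 2 / p := by positivity
      ring_nf; ring_nf at this; exact this.ne'
  have h1 := h N
  rw [e] at h1
  refine le_of_mul_le_mul_left ?_ hN'
  linarith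

theorem eta_lim {A β : ℝ} (hA : 0 ≤ A) (hβ : 0 < β)
    (h : ∀ η : ℝ, 0 < η → 1 ≤ (1 + η) ^ 2 * A ^ 2 * (β + η) ^ 2) : 1 ≤ A * β := by
  have hc : Filter.Tendsto (fun η : ℝ => (1 + η) ^ 2 * A ^ 2 * (β + η) ^ 2) (nhdsWithin 0 (Set.Ioi 0))
      (nhds ((1 + 0) ^ 2 * A ^ 2 * (β + 0) ^ 2)) := by
    have : Continuous (fun η : ℝ => (1 + η) ^ 2 * A ^ 2 * (β + η) ^ 2) := by fun_prop
    exact (this.tendsto 0).mono_left nhdsWithin_le_nhds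
  have h1 := ge_of_tendsto hc (Filter.eventually_of_mem self_mem_nhdsWithin fun η hη => h η hη)
  have h2 : 1 ≤ (A * β) ^ 2 := by rw [mul_pow]; simpa using h1
  exact (one_le_sq_iff₀ (by positivity)).mp h2

theorem pair_norm [Fact (1 ≤ ENNReal.ofReal p)] (x : Xpw p w) : ‖x‖ = max (nrmP x) (nrm2 x) := rfl

theorem Xpw_complete [Fact (1 ≤ ENNReal.ofReal p)] : CompleteSpace (Xpw p w) := by
  have hcl : IsClosed (XpwMod p w : Set (SeqP p × Seq2)) := by
    have : (XpwMod p w : Set (SeqP p × Seq2)) =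
        ⋂ n, {z | (z.2 : ℕ → ℝ) n = w n * (z.1 : ℕ → ℝ) n} := by
      ext z
      simp only [Set.mem_iInter]
      exact Iff.rfl
    rw [this]
    refine isClosed_iInter fun n => isClosed_eq ?_ ?_
    · exact (lp.lipschitzWith_one_eval 2 n).continuous.comp continuous_snd
    · exact continuous_const.mul ((lp.lipschitzWith_one_eval (ENNReal.ofReal p) n).continuous.comp continuous_fst)
  exact hcl.completeSpace_coe

/-- the `ℓ_2` component as a linear map -/
def J2 (p : ℝ) (w : ℕ → ℝ) [Fact (1 ≤ ENNReal.ofReal p)] : Xpw p w →ₗ[ℝ] Seq2 :=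
  (LinearMap.snd ℝ (SeqP p) Seq2).comp (XpwMod p w).subtype

/-- the `ℓ_p` component as a linear map -/
def JP (p : ℝ) (w : ℕ → ℝ) [Fact (1 ≤ ENNReal.ofReal p)] : Xpw p w →ₗ[ℝ] SeqP p :=
  (LinearMap.fst ℝ (SeqP p) Seq2).comp (XpwMod p w).subtype

theorem J2_norm [Fact (1 ≤ ENNReal.ofReal p)] (x : Xpw p w) : ‖J2 p w x‖ = nrm2 x := rfl
theorem JP_norm [Fact (1 ≤ ENNReal.ofReal p)] (x : Xpw p w) : ‖JP p w x‖ = nrmP x := rfl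

theorem nrm2_le [Fact (1 ≤ ENNReal.ofReal p)] (x : Xpw p w) : nrm2 x ≤ ‖x‖ := le_max_right _ _
theorem nrmP_le [Fact (1 ≤ ENNReal.ofReal p)] (x : Xpw p w) : nrmP x ≤ ‖x‖ := le_max_left _ _
theorem nrm2_nonneg [Fact (1 ≤ ENNReal.ofReal p)] (x : Xpw p w) : 0 ≤ nrm2 x := norm_nonneg _
theorem nrmP_nonneg [Fact (1 ≤ ENNReal.ofReal p)] (x : Xpw p w) : 0 ≤ nrmP x := norm_nonneg _

theorem nrmP_smul [Fact (1 ≤ ENNReal.ofReal p)] (c : ℝ) (x : Xpw p w) : nrmP (c • x) = |c| * nrmP x := by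
  rw [← JP_norm, map_smul, norm_smul, JP_norm, Real.norm_eq_abs]
theorem nrm2_smul [Fact (1 ≤ ENNReal.ofReal p)] (c : ℝ) (x : Xpw p w) : nrm2 (c • x) = |c| * nrm2 x := by
  rw [← J2_norm, map_smul, norm_smul, J2_norm, Real.norm_eq_abs]

theorem restrict_smul [Fact (1 ≤ ENNReal.ofReal p)] (E : Set ℕ) (c : ℝ) (x : Xpw p w) :
    restrict E (c • x) = c • restrict E x := by
  refine Subtype.ext (Prod.ext (Subtype.ext ?_) (Subtype.ext ?_))
  · exact Set.indicator_const_smul E c _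
  · exact Set.indicator_const_smul E c _

theorem nrmP_pos [Fact (1 ≤ ENNReal.ofReal p)] (x : Xpw p w) (hx : x ≠ 0) : 0 < nrmP x := by
  refine lt_of_le_of_ne (nrmP_nonneg x) fun h => hx ?_
  have h1 : (Xpw.pair x).1 = 0 := norm_eq_zero.mp h.symm
  refine Subtype.ext (Prod.ext h1 (lp.ext (funext fun n => ?_)))
  have h2 : ((Xpw.pair x).2 : ℕ → ℝ) n = w n * ((Xpw.pair x).1 : ℕ → ℝ) n :=
        (show ↥(XpwMod p w) from x).2 n
  rw [h1] at h2
  refine h2.trans ?_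
  exact mul_zero _

theorem ratio_lower [Fact (1 ≤ ENNReal.ofReal p)] (U : Submodule ℝ (Xpw p w)) (β' : ℝ)
    (hβ' : Filter.Tendsto (fun n : ℕ => sInf {b : ℝ | ∀ ε : ℝ, 0 < ε →
        ∃ u : Xpw p w, u ∈ U ∧ u ≠ 0 ∧ ‖restrict {k : ℕ | k < n} u‖ < ε ∧ ratio u ≤ b})
      Filter.atTop (nhds β')) (u : Xpw p w) (hu : u ∈ U) : β' * nrmP u ≤ nrm2 u := by
  by_cases hu0 : u = 0
  · subst hu0
    rw [← JP_norm, ← J2_norm]; simp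
  rw [← le_div_iff₀ (nrmP_pos u hu0)]
  refine le_of_tendsto' hβ' fun n => csInf_le ⟨0, ?_⟩ ?_
  · intro b hb
    obtain ⟨v, _, _, _, h⟩ := hb 1 one_pos
    exact (div_nonneg (nrm2_nonneg v) (nrmP_nonneg v)).trans h
  · intro ε hε
    set R := ‖restrict {k : ℕ | k < n} u‖
    have hR : 0 ≤ R := norm_nonneg _
    have hc : 0 < ε / (R + 1) := by positivity
    refine ⟨(ε / (R + 1)) • u, U.smul_mem _ hu, smul_ne_zero hc.ne' hu0, ?_, ?_⟩
    · rw [restrict_smul, norm_smul, Real.norm_of_nonneg hc.le, div_mul_eq_mul_div, div_lt_iff₀ (by positivity)]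
      nlinarith
    · rw [ratio, nrm2_smul, nrmP_smul, mul_div_mul_left _ _ (abs_pos.mpr hc.ne').ne']

open Filter in
/-- Proposition 2.1: suppose `Z ⊆ X = U ⊕ W` are closed infinite
dimensional subspaces of `X_p`, with `U` isomorphic to `ℓ_2` and `W` isomorphic to
`ℓ_p`; suppose `Z` has a normalized `K`-unconditional basis `(z_n)`, let
`β = lim r(z_n) > 0` and let `β' ≤ 1` be the limit of
`inf {b : ∀ ε > 0 ∃ u ∈ U, ‖P_n u‖ < ε and r(u) ≤ b}`.  Then every bounded projection
`P` from `X` onto `Z` has `‖P‖ ≥ β'/(Kβ)`. -/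
theorem stmt10 (p : ℝ) (hp : 2 < p) [Fact (1 ≤ ENNReal.ofReal p)]
    (w : ℕ → ℝ) (hw : IsXpWeight p w)
    (Z X U W : Submodule ℝ (Xpw p w))
    (hZcl : IsClosed (Z : Set (Xpw p w))) (hXcl : IsClosed (X : Set (Xpw p w)))
    (hUcl : IsClosed (U : Set (Xpw p w))) (hWcl : IsClosed (W : Set (Xpw p w)))
    (hZinf : ¬ FiniteDimensional ℝ ↥Z) (hXinf : ¬ FiniteDimensional ℝ ↥X)
    (hUinf : ¬ FiniteDimensional ℝ ↥U) (hWinf : ¬ FiniteDimensional ℝ ↥W)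
    (hZX : Z ≤ X) (hXUW : X = U ⊔ W) (hUWdisj : U ⊓ W = ⊥)
    (hU2 : Nonempty (↥U ≃L[ℝ] Seq2)) (hWp : Nonempty (↥W ≃L[ℝ] SeqP p))
    (z : ℕ → Xpw p w) (hzZ : ∀ n, z n ∈ Z) (hz1 : ∀ n, ‖z n‖ = 1)
    (hzspan : Z = (Submodule.span ℝ (Set.range z)).topologicalClosure)
    (K : ℝ)
    (hK : ∀ a θ : ℕ → ℝ, (∀ n, θ n = 1 ∨ θ n = -1) → ∀ s : Finset ℕ,
      ‖∑ n ∈ s, (θ n * a n) • z n‖ ≤ K * ‖∑ n ∈ s, a n • z n‖)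
    (β : ℝ) (hβ : Tendsto (fun n => ratio (z n)) atTop (nhds β)) (hβ0 : 0 < β)
    (β' : ℝ)
    (hβ' : Tendsto (fun n : ℕ => sInf {b : ℝ | ∀ ε : ℝ, 0 < ε →
        ∃ u : Xpw p w, u ∈ U ∧ u ≠ 0 ∧ ‖restrict {k : ℕ | k < n} u‖ < ε ∧ ratio u ≤ b})
      atTop (nhds β'))
    (hβ'1 : β' ≤ 1)
    (P : ↥X →L[ℝ] ↥X)
    (hPZ : ∀ x : ↥X, (P x : Xpw p w) ∈ Z)
    (hPid : ∀ x : ↥X, (x : Xpw p w) ∈ Z → P x = x) :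
    ‖P‖ ≥ β' / (K * β) := by
  classical
  have hXc : CompleteSpace (Xpw p w) := Xpw_complete
  have hXX : CompleteSpace ↥X := hXcl.completeSpace_coe
  have hUU : CompleteSpace ↥U := hUcl.completeSpace_coe
  have hWW : CompleteSpace ↥W := hWcl.completeSpace_coe
  have hK1 : 1 ≤ K := by
    have := hK (fun _ => 1) (fun _ => 1) (fun _ => Or.inl rfl) {0}
    simpa [hz1] using this
  have hK0 : 0 < K := by linarith
  rcases le_or_gt β' 0 with hneg | hpos
  · exact (div_nonpos_of_nonpos_of_nonneg hneg (by positivity)).trans P.opNorm_nonneg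
  have hr : ∀ u ∈ U, β' * nrmP u ≤ nrm2 u := ratio_lower U β' hβ'
  have hUn : ∀ u ∈ U, ‖u‖ ≤ nrm2 u / β' := by
    intro u hu
    rw [le_div_iff₀ hpos, pair_norm]
    rcases max_choice (nrmP u) (nrm2 u) with h | h
    · rw [h, mul_comm]; exact hr u hu
    · rw [h]; nlinarith [nrm2_nonneg u]
  -- the decomposition
  have hUX : U ≤ X := hXUW ▸ le_sup_left
  have hWX : W ≤ X := hXUW ▸ le_sup_right
  let iU : ↥U →L[ℝ] ↥X := U.subtypeL.codRestrict X (fun u => hUX u.2)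
  let iW : ↥W →L[ℝ] ↥X := W.subtypeL.codRestrict X (fun u => hWX u.2)
  let S : (↥U × ↥W) →L[ℝ] ↥X := iU.coprod iW
  have hS : ∀ a, ((S a : ↥X) : Xpw p w) = (a.1 : Xpw p w) + (a.2 : Xpw p w) := fun a => rfl
  have hinj : S.ker = ⊥ := by
    rw [LinearMap.ker_eq_bot']
    intro a ha
    have h0 : (a.1 : Xpw p w) + (a.2 : Xpw p w) = 0 := by
      rw [← hS]
      exact congrArg Subtype.val ha
    have h1 : (a.1 : Xpw p w) ∈ U ⊓ W := by
      refine ⟨a.1.2, ?_⟩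
      rw [eq_neg_of_add_eq_zero_left h0]
      exact W.neg_mem a.2.2
    rw [hUWdisj, Submodule.mem_bot] at h1
    rw [h1, zero_add] at h0
    exact Prod.ext (Subtype.ext h1) (Subtype.ext h0)
  have hsurj : S.range = ⊤ := by
    rw [LinearMap.range_eq_top]
    intro x
    have hx : (x : Xpw p w) ∈ U ⊔ W := hXUW ▸ x.2
    obtain ⟨a, ha, b, hb, hab⟩ := Submodule.mem_sup.mp hx
    exact ⟨(⟨a, ha⟩, ⟨b, hb⟩), Subtype.ext hab⟩
  let e := ContinuousLinearEquiv.ofBijective S hinj hsurj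
  have he : ∀ x, S (e.symm x) = x := fun x => ContinuousLinearEquiv.ofBijective_apply_symm_apply S hinj hsurj x
  obtain ⟨φ⟩ := hWp
  let L : ↥X →L[ℝ] SeqP p := (φ : ↥W →L[ℝ] SeqP p).comp
    ((ContinuousLinearMap.snd ℝ ↥U ↥W).comp (e.symm : ↥X →L[ℝ] (↥U × ↥W)))
  let zx : ℕ → ↥X := fun n => ⟨z n, hZX (hzZ n)⟩
  have hzx1 : ∀ n, ‖zx n‖ = 1 := hz1
  have hKx : ∀ a θ : ℕ → ℝ, (∀ n, θ n = 1 ∨ θ n = -1) → ∀ s : Finset ℕ,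
      ‖∑ n ∈ s, (θ n * a n) • zx n‖ ≤ K * ‖∑ n ∈ s, a n • zx n‖ := by
    intro a θ hθ s
    have := hK a θ hθ s
    rw [Submodule.coe_norm, Submodule.coe_norm, Submodule.coe_sum, Submodule.coe_sum]
    exact this
  -- weak nullness
  have hwn : ∀ f : ↥X →L[ℝ] ℝ, Tendsto (fun n => f (zx n)) atTop (nhds 0) := by
    refine weak_null hp (fun x : ↥X => nrmP (x : Xpw p w) ^ p + nrm2 (x : Xpw p w) ^ p) ?_ ?_ zx ?_ K hK0 hKx
    · intro x y
      have h1 := clark_lp hp (JP p w (x : Xpw p w)) (JP p w (y : Xpw p w))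
      have h2 := clark_inner hp (J2 p w (x : Xpw p w)) (J2 p w (y : Xpw p w))
      rw [← map_add, ← map_sub] at h1 h2
      simp only [JP_norm, J2_norm] at h1 h2
      simp only [Submodule.coe_add, Submodule.coe_sub]
      linarith
    · intro x
      have h1 := Real.rpow_nonneg (nrmP_nonneg (x : Xpw p w)) p
      have h2 := Real.rpow_nonneg (nrm2_nonneg (x : Xpw p w)) p
      rw [Submodule.coe_norm, pair_norm]
      rcases max_choice (nrmP (x : Xpw p w)) (nrm2 (x : Xpw p w)) with h | h <;> rw [h] <;> linarith
    · intro n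
      have h1 := Real.rpow_le_one (nrmP_nonneg (z n)) ((nrmP_le (z n)).trans (hz1 n).le) (by linarith : 0 ≤ p)
      have h2 := Real.rpow_le_one (nrm2_nonneg (z n)) ((nrm2_le (z n)).trans (hz1 n).le) (by linarith : 0 ≤ p)
      show nrmP (z n) ^ p + nrm2 (z n) ^ p ≤ 2
      linarith
  let v : ℕ → SeqP p := fun n => L (zx n)
  have hvC : ∀ n, ‖v n‖ ≤ ‖L‖ := fun n => by
    have := L.le_opNorm (zx n)
    rwa [hzx1, mul_one] at this
  have hv0 : ∀ k, Tendsto (fun n => v n k) atTop (nhds 0) := by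
    intro k
    let ev : SeqP p →L[ℝ] ℝ := LinearMap.mkContinuous
      { toFun := fun x => x k, map_add' := fun _ _ => rfl, map_smul' := fun _ _ => rfl } 1
      (fun x => by
        rw [one_mul]
        exact lp.norm_apply_le_norm (zero_lt_one.trans_le Fact.out).ne' x k)
    exact hwn (ev.comp L)
  -- components
  let uu : ℕ → Xpw p w := fun n => ((e.symm (zx n)).1 : Xpw p w)
  let ww : ℕ → ↥X := fun n => iW (e.symm (zx n)).2
  have hzuw : ∀ n, zx n = iU (e.symm (zx n)).1 + ww n := fun n => (he (zx n)).symm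
  have hww : ∀ n, ww n = (iW.comp (φ.symm : SeqP p →L[ℝ] ↥W)) (v n) := fun n => by
    simp [ww, v, L]
  set Q : SeqP p →L[ℝ] ↥X := iW.comp (φ.symm : SeqP p →L[ℝ] ↥W) with hQ
  obtain ⟨g, hg1, hg2⟩ := biorth z hz1 K hK1 hK
  let G : ℕ → (↥X →L[ℝ] ℝ) := fun j => (g j).comp (X.subtypeL.comp P)
  set A := K * ‖P‖ / β' with hA
  have hA0 : 0 ≤ A := by positivity
  have hind : ∀ n, 1 ≤ A * nrm2 (uu n) + |G n (ww n)| := by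
    intro n
    have h1 : G n (zx n) = 1 := by
      have : P (zx n) = zx n := hPid _ (hzZ n)
      show g n ((P (zx n) : ↥X) : Xpw p w) = 1
      rw [this, hg1]; simp
    have h2 : G n (zx n) = G n (iU (e.symm (zx n)).1) + G n (ww n) := by
      rw [← map_add, ← hzuw]
    have h3 : G n (iU (e.symm (zx n)).1) ≤ A * nrm2 (uu n) := by
      have b1 : G n (iU (e.symm (zx n)).1) ≤ ‖g n‖ * (‖P‖ * ‖uu n‖) := by
        refine (le_abs_self _).trans (((g n).le_opNorm _).trans ?_)
        gcongr
        exact P.le_opNorm (iU (e.symm (zx n)).1)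
      have b2 : ‖g n‖ * (‖P‖ * ‖uu n‖) ≤ K * (‖P‖ * (nrm2 (uu n) / β')) := by
        gcongr
        · exact hg2 n
        · exact hUn _ (e.symm (zx n)).1.2
      refine b1.trans (b2.trans (le_of_eq ?_))
      rw [hA]; ring
    have := le_abs_self (G n (ww n))
    linarith
  have main : ∀ η : ℝ, 0 < η → 1 ≤ (1 + η) ^ 2 * A ^ 2 * (β + η) ^ 2 := by
    intro η hη
    set δ := min 1 (β / 2) with hδ
    have hδ0 : 0 < δ := by positivity
    have ev1 : ∀ᶠ n in atTop, β / 2 < ratio (z n) := hβ.eventually (lt_mem_nhds (by linarith))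
    have ev2 : ∀ᶠ n in atTop, ratio (z n) < β + η := hβ.eventually (gt_mem_nhds (by linarith))
    obtain ⟨n0, hn0⟩ := Filter.eventually_atTop.mp (ev1.and ev2)
    have hz0 : ∀ n, z n ≠ 0 := fun n h => by
      have := hz1 n
      rw [h, norm_zero] at this
      exact zero_ne_one this
    have hz2 : ∀ n ≥ n0, δ ≤ nrm2 (z n) ∧ nrm2 (z n) ≤ β + η := by
      intro n hn
      obtain ⟨h1, h2⟩ := hn0 n hn
      have hP := nrmP_pos _ (hz0 n)
      have hP1 : nrmP (z n) ≤ 1 := (nrmP_le _).trans (hz1 n).le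
      rw [ratio, lt_div_iff₀ hP] at h1
      rw [ratio, div_lt_iff₀ hP] at h2
      constructor
      · have h3 := hz1 n
        rw [pair_norm] at h3
        rcases max_choice (nrmP (z n)) (nrm2 (z n)) with h | h
        · rw [h] at h3
          rw [h3] at h1
          exact (min_le_right _ _).trans (by linarith)
        · rw [h] at h3
          rw [h3]; exact min_le_left _ _
      · nlinarith
    set D := ‖L‖ ^ p + 1 with hD
    have hD0 : 0 < D := by positivity
    set B := K ^ 2 / δ ^ 2 * ‖P‖ ^ 2 with hB
    have hB0 : 0 ≤ B := by positivity
    refine final_lim (p := p)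
      (b := ((1 + η) * A ^ 2 * (1 + 1 / η) + (1 + 1 / η) * B) * (‖Q‖ ^ 2 * D ^ (2 / p))) hp ?_
    intro N
    obtain ⟨F, hcard, hFn, hFT⟩ := hump hp v ‖L‖ hvC hv0 n0 N
    set M := ‖Q‖ ^ 2 * D ^ (2 / p) * (N : ℝ) ^ (2 / p) with hM
    have hTM : ∀ T ⊆ F, ‖∑ i ∈ F, (if i ∈ T then (1:ℝ) else -1) • ww i‖ ^ 2 ≤ M := by
      intro T hT
      have h1 := hFT T hT
      set s := ∑ i ∈ F, (if i ∈ T then (1:ℝ) else -1) • v i with hs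
      have h2 : ∑ i ∈ F, (if i ∈ T then (1:ℝ) else -1) • ww i = Q s := by
        rw [hs, map_sum]
        exact Finset.sum_congr rfl fun i _ => by rw [map_smul, hww]
      have h3 : ‖s‖ ^ 2 ≤ D ^ (2 / p) * (N : ℝ) ^ (2 / p) := by
        rw [← Real.mul_rpow hD0.le (by positivity), mul_comm D]
        have h4 := Real.rpow_le_rpow (by positivity) h1 (by positivity : 0 ≤ 2 / p)
        rw [← Real.rpow_mul (norm_nonneg _), mul_div_cancel₀ _ (by linarith : p ≠ 0)] at h4
        rw [← Real.rpow_natCast]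
        exact_mod_cast h4
      rw [h2, hM, mul_assoc]
      calc ‖Q s‖ ^ 2 ≤ (‖Q‖ * ‖s‖) ^ 2 := pow_le_pow_left₀ (norm_nonneg _) (Q.le_opNorm s) 2
        _ = ‖Q‖ ^ 2 * ‖s‖ ^ 2 := by ring
        _ ≤ _ := by gcongr
    have a1 := avg1 (fun n => J2 p w (uu n)) (fun n => J2 p w (z n)) (fun n => J2 p w (ww n : Xpw p w))
      (fun n => by
        rw [← map_add]
        exact congrArg (fun x : ↥X => J2 p w (x : Xpw p w)) (hzuw n)) F M η hη (fun T hT => by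
        refine le_trans (pow_le_pow_left₀ (norm_nonneg _) ?_ 2) (hTM T hT)
        have := nrm2_le ((∑ i ∈ F, (if i ∈ T then (1:ℝ) else -1) • ww i : ↥X) : Xpw p w)
        rw [← J2_norm, Submodule.coe_sum, map_sum] at this
        simp only [Submodule.coe_smul, map_smul] at this
        refine this.trans (le_of_eq ?_)
        rw [Submodule.coe_norm, Submodule.coe_sum]
        rfl)
    simp only [J2_norm] at a1
    have a2 := avg2 G ww F B M hB0 (fun y => by
      have h1 := lower2 (J2 p w) nrm2_le z K hK0.le hK g hg1 F (P y : Xpw p w) (hzspan ▸ hPZ y)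
      have h2 : δ ^ 2 * ∑ j ∈ F, (G j y) ^ 2 ≤ ∑ j ∈ F, (g j (P y : Xpw p w)) ^ 2 * ‖J2 p w (z j)‖ ^ 2 := by
        rw [Finset.mul_sum]
        refine Finset.sum_le_sum fun j hj => ?_
        rw [mul_comm]
        have := (hz2 j (hFn j hj)).1
        rw [J2_norm]
        show (g j (P y : Xpw p w)) ^ 2 * δ ^ 2 ≤ _
        gcongr
      have h3 : ‖(P y : Xpw p w)‖ ≤ ‖P‖ * ‖y‖ := P.le_opNorm y
      have h4 : K ^ 2 * ‖(P y : Xpw p w)‖ ^ 2 ≤ K ^ 2 * (‖P‖ * ‖y‖) ^ 2 := by gcongr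
      have h5 : δ ^ 2 * ∑ j ∈ F, (G j y) ^ 2 ≤ δ ^ 2 * (B * ‖y‖ ^ 2) := by
        refine (h2.trans (h1.trans h4)).trans (le_of_eq ?_)
        rw [hB]; field_simp
      exact le_of_mul_le_mul_left h5 (by positivity)) hTM
    have a3 : ∑ i ∈ F, nrm2 (z i) ^ 2 ≤ N * (β + η) ^ 2 := by
      have : ∑ i ∈ F, nrm2 (z i) ^ 2 ≤ ∑ i ∈ F, (β + η) ^ 2 := by
        refine Finset.sum_le_sum fun i hi => ?_
        exact pow_le_pow_left₀ (nrm2_nonneg _) (hz2 i (hFn i hi)).2 2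
      rwa [Finset.sum_const, hcard, nsmul_eq_mul] at this
    have a4 : (N : ℝ) ≤ (1 + η) * A ^ 2 * ∑ i ∈ F, nrm2 (uu i) ^ 2 + (1 + 1 / η) * ∑ i ∈ F, (G i (ww i)) ^ 2 := by
      have : ∑ i ∈ F, (1:ℝ) ≤ ∑ i ∈ F, ((1 + η) * A ^ 2 * nrm2 (uu i) ^ 2 + (1 + 1 / η) * (G i (ww i)) ^ 2) := by
        refine Finset.sum_le_sum fun i _ => ?_
        have h1 : (1:ℝ) ≤ (A * nrm2 (uu i) + |G i (ww i)|) ^ 2 := one_le_pow₀ (hind i)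
        refine h1.trans ((young hη).trans (le_of_eq ?_))
        rw [sq_abs]; ring
      rwa [Finset.sum_const, hcard, nsmul_eq_mul, mul_one, Finset.sum_add_distrib, ← Finset.mul_sum,
        ← Finset.mul_sum] at this
    have a5 : ∑ i ∈ F, nrm2 (uu i) ^ 2 ≤ (1 + η) * (N * (β + η) ^ 2) + (1 + 1 / η) * M := by
      refine a1.trans ?_
      gcongr
    calc (N : ℝ) ≤ _ := a4
      _ ≤ (1 + η) * A ^ 2 * ((1 + η) * (N * (β + η) ^ 2) + (1 + 1 / η) * M) + (1 + 1 / η) * (B * M) := by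
        gcongr
      _ = _ := by rw [hM]; ring
  have hfin := eta_lim hA0 hβ0 main
  rw [ge_iff_le, div_le_iff₀ (by positivity)]
  rw [hA, div_mul_eq_mul_div, le_div_iff₀ hpos] at hfin
  linarith
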